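/- arXiv:math/0205116 — 2 statements merged into one kernel-verified Lean document; each statement's English description precedes it below -/
import Mathlib

section
/- Let k be an even positive integer. Suppose Z(τ,σ) is a holomorphic function on H × H admitting an absolutely convergent expansion Z(τ,σ) = ∑_{n,m=0}^∞ a_{n,m} q^n r^m with q = e^{2πiτ}, r = e^{2πiσ}, satisfying Z(τ,σ) = −Z(σ,τ), and obeying the three-term relations Z(τ,σ) = Z(τ,τ+σ) + Z(τ+σ,σ) for all τ,σ ∈ H and Z(τ,σ) = τ^{−k} Z(−1/τ, σ/τ) + σ^{−k} Z(−τ/σ, −1/σ) for all τ,σ ∈ H with σ/τ ∈ H. Then there exists a modular form G of weight k for SL(2,ℤ) such that Z(τ,σ) = G(τ) − G(σ) for all τ,σ ∈ H. -/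
open Complex Filter Topology

/-- The open upper half-plane as a subset of `ℂ`. -/
def UHP : Set ℂ := {z : ℂ | 0 < z.im}

/-- `qexp τ = e^{2πiτ}`. -/
noncomputable def qexp (τ : ℂ) : ℂ := Complex.exp (2 * Real.pi * Complex.I * τ)

/-- Elliptic zeta values `Z_k(τ,σ)`. -/
noncomputable def ellipticZeta (k : ℕ) (τ σ : ℂ) : ℂ :=
  -((2 * (Real.pi : ℂ) * Complex.I) ^ k / (Nat.factorial (k - 1) : ℂ)) *
    ∑' j : ℕ+, (j : ℂ) ^ (k - 1) *
      (qexp τ ^ (j : ℕ) - (-1 : ℂ) ^ k * qexp σ ^ (j : ℕ)) /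
      ((1 - qexp τ ^ (j : ℕ)) * (1 - qexp σ ^ (j : ℕ)))

/-- `D_k(q)`: the normalized generating function of sums of `(k-1)`-st powers of divisors. -/
noncomputable def Dk (k : ℕ) (q : ℂ) : ℂ :=
  ((-2 * (Real.pi : ℂ) * Complex.I) ^ k / (Nat.factorial (k - 1) : ℂ)) *
    ∑' n : ℕ+, (∑ d ∈ Nat.divisors (n : ℕ), (d : ℂ) ^ (k - 1)) * q ^ (n : ℕ)

/-- Ruijsenaars's elliptic gamma function. -/
noncomputable def ellipticGamma (z τ σ : ℂ) : ℂ :=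
  ∏' p : ℕ × ℕ,
    (1 - qexp τ ^ (p.1 + 1) * qexp σ ^ (p.2 + 1) * Complex.exp (-(2 * Real.pi * Complex.I) * z)) /
    (1 - qexp τ ^ p.1 * qexp σ ^ p.2 * Complex.exp (2 * Real.pi * Complex.I * z))

/-- The modified theta function `θ₀(z,τ)`. -/
noncomputable def theta0 (z τ : ℂ) : ℂ :=
  ∏' j : ℕ, (1 - qexp τ ^ (j + 1) * Complex.exp (-(2 * Real.pi * Complex.I) * z)) *
            (1 - qexp τ ^ j * Complex.exp (2 * Real.pi * Complex.I * z))

/-- A modular form of weight `k` for `SL(2,ℤ)`: a holomorphic function on the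
upper half-plane transforming with weight `k` under `SL(2,ℤ)` and bounded as `Im τ → ∞`. -/
def IsModularForm (k : ℕ) (G : ℂ → ℂ) : Prop :=
  DifferentiableOn ℂ G UHP ∧
  (∀ A : Matrix.SpecialLinearGroup (Fin 2) ℤ, ∀ τ ∈ UHP,
      G (((A 0 0 : ℤ) * τ + (A 0 1 : ℤ)) / ((A 1 0 : ℤ) * τ + (A 1 1 : ℤ))) =
        ((A 1 0 : ℤ) * τ + (A 1 1 : ℤ)) ^ k * G τ) ∧
  (∃ C : ℝ, ∀ τ ∈ UHP, 1 ≤ τ.im → ‖G τ‖ ≤ C)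

/-- All factors in the defining double product of the elliptic gamma function are nonzero. -/
def EGFactorsNeZero (z τ σ : ℂ) : Prop :=
  ∀ j ℓ : ℕ,
    (1 - qexp τ ^ (j + 1) * qexp σ ^ (ℓ + 1) * Complex.exp (-(2 * Real.pi * Complex.I) * z)) ≠ 0 ∧
    (1 - qexp τ ^ j * qexp σ ^ ℓ * Complex.exp (2 * Real.pi * Complex.I * z)) ≠ 0

/-!
The relation `Z(τ,σ) = Z(τ,τ+σ) + Z(τ+σ,σ)` says that the coefficients `a n m` are unchanged by
subtractive Euclidean steps on `(n, m)` as long as both indices stay positive. Such a coefficient is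
therefore one on the diagonal, and antisymmetry kills those: only the coefficients on the two axes
survive, and `Z(τ,σ) = g(τ) - g(σ)` for a one-variable `q`-series `g`.

The second relation says that `h = g|S - g` is a cocycle for multiplication,
`h(τρ) = h(τ) + τ^(-k) h(ρ)`. Comparing `h(τρ)` with `h(ρτ)` gives
`h(τ) (1 - ρ^(-k)) = h(ρ) (1 - τ^(-k))`, so that `h(τ) = c (1 - τ^(-k))`; hence `g + c` is invariant
under `S` as well as under `T`.
-/

lemma eq_apply_gcd_gcd_of_add_invariant {α : Type*} {a : ℕ → ℕ → α}
    (add_left : ∀ n m, 0 < n → a (n + m) m = a n m)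
    (add_right : ∀ n m, 0 < m → a n (n + m) = a n m) {n m : ℕ} (hn : 0 < n) (hm : 0 < m) :
    a n m = a (n.gcd m) (n.gcd m) := by
  induction hN : n + m using Nat.strong_induction_on generalizing n m with
  | _ N ih =>
    rcases lt_trichotomy n m with hlt | rfl | hlt
    · obtain ⟨d, rfl⟩ := Nat.exists_eq_add_of_lt hlt
      rw [add_assoc, add_right _ _ d.succ_pos, ih _ (by omega) hn d.succ_pos rfl]
      simp
    · simp
    · obtain ⟨d, rfl⟩ := Nat.exists_eq_add_of_lt hlt
      rw [add_assoc, add_comm m, add_left _ _ d.succ_pos, ih _ (by omega) d.succ_pos hm rfl]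
      simp

section PowerSeries

variable {𝕜 E : Type*} [NontriviallyNormedField 𝕜] [NormedAddCommGroup E] [NormedSpace 𝕜 E]

lemma eq_zero_of_hasSum_pow_smul_zero {c : ℕ → E}
    (h : ∀ᶠ q : 𝕜 in 𝓝[≠] 0, HasSum (fun n ↦ q ^ n • c n) 0) : c = 0 := by
  let p : FormalMultilinearSeries 𝕜 𝕜 E := fun n ↦ ContinuousMultilinearMap.mkPiRing 𝕜 (Fin n) (c n)
  have hp_coeff (n : ℕ) : p.coeff n = c n := by simp [p, FormalMultilinearSeries.coeff]
  have hp : HasFPowerSeriesAt (fun q : 𝕜 ↦ ∑' n, q ^ n • c n) p 0 := by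
    simp only [hasFPowerSeriesAt_iff, hp_coeff, zero_add]
    rw [eventually_nhdsWithin_iff] at h
    filter_upwards [h] with q hq
    rcases eq_or_ne q 0 with rfl | hq0
    · exact (summable_of_ne_finset_zero (s := {0}) fun n hn ↦ by
        simp [zero_pow (Finset.notMem_singleton.1 hn)]).hasSum
    · exact (hq hq0).summable.hasSum
  have hp_zero : p = 0 := hp.eq_zero_of_eventually <|
    hp.analyticAt.frequently_zero_iff_eventually_zero.1 (h.mono fun _ hq ↦ hq.tsum_eq).frequently
  ext n
  rw [← hp_coeff, hp_zero]
  rfl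

lemma eq_zero_of_hasSum_pow_smul_pow_smul_zero [CompleteSpace E] {b : ℕ → ℕ → E}
    (h : ∀ᶠ r : 𝕜 in 𝓝[≠] 0, ∀ᶠ q : 𝕜 in 𝓝[≠] 0,
      HasSum (fun p : ℕ × ℕ ↦ q ^ p.1 • r ^ p.2 • b p.1 p.2) 0) : b = 0 := by
  have row_sum : ∀ᶠ r : 𝕜 in 𝓝[≠] 0, ∀ n, HasSum (fun m ↦ r ^ m • b n m) 0 := by
    filter_upwards [h] with r hr
    have row_summable (n : ℕ) : Summable fun m ↦ r ^ m • b n m := by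
      obtain ⟨q, hq, hq0⟩ := (hr.and eventually_mem_nhdsWithin).exists
      simpa [inv_smul_smul₀ (pow_ne_zero n hq0)] using
        (hq.summable.prod_factor n).const_smul (q ^ n)⁻¹
    have row_tsum : (fun n ↦ ∑' m, r ^ m • b n m) = 0 := by
      refine eq_zero_of_hasSum_pow_smul_zero (𝕜 := 𝕜) (hr.mono fun q hq ↦ ?_)
      exact hq.prod_fiberwise fun n ↦ (row_summable n).hasSum.const_smul (q ^ n)
    exact fun n ↦ (row_summable n).hasSum_iff.2 (congrFun row_tsum n)
  funext n
  exact eq_zero_of_hasSum_pow_smul_zero (row_sum.mono fun r hr ↦ hr n)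

end PowerSeries

section UpperHalfPlane

lemma I_mem_UHP : I ∈ UHP := by simp [UHP]

lemma ne_zero_of_mem_UHP {τ : ℂ} (hτ : τ ∈ UHP) : τ ≠ 0 := by
  rintro rfl
  simp [UHP] at hτ

lemma add_mem_UHP {τ σ : ℂ} (hτ : τ ∈ UHP) (hσ : σ ∈ UHP) : τ + σ ∈ UHP :=
  (add_pos hτ hσ : 0 < τ.im + σ.im)

lemma neg_one_div_mem_UHP {τ : ℂ} (hτ : τ ∈ UHP) : -1 / τ ∈ UHP := by
  simpa [UHP, neg_div, inv_neg] using UpperHalfPlane.im_inv_neg_coe_pos ⟨τ, hτ⟩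

lemma exists_one_lt_norm_mul_mem_UHP {ρ σ : ℂ} (hρ : ρ ∈ UHP) (hσ : σ ∈ UHP) :
    ∃ τ ∈ UHP, 1 < ‖τ‖ ∧ τ * ρ ∈ UHP ∧ τ * σ ∈ UHP := by
  have eventually_mul_mem {z : ℂ} (hz : z ∈ UHP) : ∀ᶠ t : ℝ in atTop, (t + I) * z ∈ UHP := by
    filter_upwards [(tendsto_id.atTop_mul_const hz).eventually_gt_atTop (-z.re)] with t ht
    simpa [UHP, neg_lt_iff_pos_add] using ht
  obtain ⟨t, ht, htρ, htσ⟩ :=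
    ((eventually_gt_atTop 1).and ((eventually_mul_mem hρ).and (eventually_mul_mem hσ))).exists
  refine ⟨t + I, by simp [UHP], ?_, htρ, htσ⟩
  calc 1 < t := ht
    _ = (t + I).re := by simp
    _ ≤ ‖t + I‖ := re_le_norm _

end UpperHalfPlane

section QExp

lemma qexp_eq_qParam (τ : ℂ) : qexp τ = Function.Periodic.qParam 1 τ := by
  simp [qexp, Function.Periodic.qParam]

lemma qexp_add (τ σ : ℂ) : qexp (τ + σ) = qexp τ * qexp σ := by
  rw [qexp, mul_add, exp_add, qexp, qexp]

lemma qexp_add_one (τ : ℂ) : qexp (τ + 1) = qexp τ := by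
  rw [qexp_add, show qexp 1 = 1 by simp [qexp], mul_one]

lemma differentiable_qexp : Differentiable ℂ qexp := by
  unfold qexp
  fun_prop

lemma norm_qexp_le {τ σ : ℂ} (h : τ.im ≤ σ.im) : ‖qexp σ‖ ≤ ‖qexp τ‖ := by
  simp only [qexp_eq_qParam, Function.Periodic.norm_qParam, div_one, Real.exp_le_exp]
  nlinarith [Real.pi_pos]

lemma eventually_exists_qexp_eq : ∀ᶠ q : ℂ in 𝓝[≠] 0, ∃ τ ∈ UHP, qexp τ = q := by
  filter_upwards [eventually_mem_nhdsWithin,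
    nhdsWithin_le_nhds (Metric.ball_mem_nhds (0 : ℂ) one_pos)] with q hq0 hq1
  refine ⟨Function.Periodic.invQParam 1 q,
    Function.Periodic.im_invQParam_pos_of_norm_lt_one one_pos (mem_ball_zero_iff.1 hq1) hq0, ?_⟩
  rw [qexp_eq_qParam, Function.Periodic.qParam_right_inv one_ne_zero hq0]

end QExp

/-- The one-variable `q`-series `∑ c n qⁿ` at `q = e^{2πiτ}`, with value `0` where it diverges. -/
noncomputable def qSeries (c : ℕ → ℂ) (τ : ℂ) : ℂ := ∑' n, c n * qexp τ ^ n

section QSeries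

lemma qSeries_add_one (c : ℕ → ℂ) (τ : ℂ) : qSeries c (τ + 1) = qSeries c τ := by
  simp only [qSeries, qexp_add_one]

lemma norm_qSeries_term_le (c : ℕ → ℂ) {τ σ : ℂ} (h : τ.im ≤ σ.im) (n : ℕ) :
    ‖c n * qexp σ ^ n‖ ≤ ‖c n * qexp τ ^ n‖ := by
  simp only [norm_mul, norm_pow]
  gcongr
  exact norm_qexp_le h

lemma norm_qSeries_le {c : ℕ → ℂ} {τ σ : ℂ} (hτ : Summable fun n ↦ c n * qexp τ ^ n)
    (h : τ.im ≤ σ.im) : ‖qSeries c σ‖ ≤ ∑' n, ‖c n * qexp τ ^ n‖ :=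
  tsum_of_norm_bounded hτ.norm.hasSum (norm_qSeries_term_le c h)

lemma differentiableOn_qSeries {c : ℕ → ℂ}
    (hc : ∀ τ ∈ UHP, Summable fun n ↦ c n * qexp τ ^ n) :
    DifferentiableOn ℂ (qSeries c) UHP := by
  intro τ hτ
  obtain ⟨y, hy, hyτ⟩ := exists_between (show 0 < τ.im from hτ)
  have summable_at_height : Summable fun n ↦ ‖c n * qexp (y * I) ^ n‖ :=
    (hc (y * I) (by simpa [UHP] using hy)).norm
  have half_plane_open : IsOpen {z : ℂ | y < z.im} := isOpen_lt continuous_const continuous_im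
  have diff_above : DifferentiableOn ℂ (qSeries c) {z | y < z.im} :=
    differentiableOn_tsum_of_summable_norm summable_at_height
      (fun n ↦ ((differentiable_qexp.pow n).const_mul (c n)).differentiableOn) half_plane_open
      fun n z hz ↦ norm_qSeries_term_le c (by simpa using le_of_lt hz) n
  exact (diff_above.differentiableAt (half_plane_open.mem_nhds hyτ)).differentiableWithinAt

end QSeries

/-- `F(τ,σ) = ∑ a n m qⁿ rᵐ` on `H × H`, where `q = e^{2πiτ}` and `r = e^{2πiσ}`. Unconditional
summability over `ℕ × ℕ` is the same as absolute convergence. -/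
def HasDoubleQExpansion (F : ℂ → ℂ → ℂ) (a : ℕ → ℕ → ℂ) : Prop :=
  ∀ τ ∈ UHP, ∀ σ ∈ UHP,
    HasSum (fun p : ℕ × ℕ ↦ a p.1 p.2 * qexp τ ^ p.1 * qexp σ ^ p.2) (F τ σ)

namespace HasDoubleQExpansion

variable {F F' : ℂ → ℂ → ℂ} {a a' : ℕ → ℕ → ℂ}

lemma add (ha : HasDoubleQExpansion F a) (ha' : HasDoubleQExpansion F' a') :
    HasDoubleQExpansion (fun τ σ ↦ F τ σ + F' τ σ) (fun n m ↦ a n m + a' n m) := by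
  intro τ hτ σ hσ
  simpa only [add_mul] using (ha τ hτ σ hσ).add (ha' τ hτ σ hσ)

lemma neg (ha : HasDoubleQExpansion F a) :
    HasDoubleQExpansion (fun τ σ ↦ -F τ σ) (fun n m ↦ -a n m) := by
  intro τ hτ σ hσ
  simpa only [neg_mul] using (ha τ hτ σ hσ).neg

lemma swap (ha : HasDoubleQExpansion F a) :
    HasDoubleQExpansion (fun τ σ ↦ F σ τ) (fun n m ↦ a m n) := by
  intro τ hτ σ hσ
  simpa [Function.comp_def, mul_right_comm] using
    (Equiv.prodComm ℕ ℕ).hasSum_iff.2 (ha σ hσ τ hτ)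

lemma comp_add_right (ha : HasDoubleQExpansion F a) :
    HasDoubleQExpansion (fun τ σ ↦ F τ (τ + σ)) (fun n m ↦ if m ≤ n then a (n - m) m else 0) := by
  intro τ hτ σ hσ
  have shear_injective : Function.Injective fun p : ℕ × ℕ ↦ (p.1 + p.2, p.2) := by
    rintro ⟨n, m⟩ ⟨n', m'⟩ h
    obtain ⟨hsum, rfl⟩ := Prod.mk.inj h
    exact Prod.ext (Nat.add_right_cancel hsum) rfl
  refine (shear_injective.hasSum_iff ?_).1 ?_
  · rintro ⟨n, m⟩ h
    have hnm : ¬m ≤ n := fun hmn ↦ h ⟨(n - m, m), by simp [hmn]⟩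
    simp [hnm]
  · refine (ha τ hτ (τ + σ) (add_mem_UHP hτ hσ)).congr_fun fun p ↦ ?_
    simp only [Function.comp_apply, Nat.le_add_left, if_true, Nat.add_sub_cancel, qexp_add]
    ring

lemma comp_add_left (ha : HasDoubleQExpansion F a) :
    HasDoubleQExpansion (fun τ σ ↦ F (τ + σ) σ) (fun n m ↦ if n ≤ m then a n (m - n) else 0) := by
  simpa only [add_comm] using ha.swap.comp_add_right.swap

lemma coeff_eq_zero (ha : HasDoubleQExpansion F a) (hF : ∀ τ ∈ UHP, ∀ σ ∈ UHP, F τ σ = 0) :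
    a = 0 := by
  refine eq_zero_of_hasSum_pow_smul_pow_smul_zero (𝕜 := ℂ) ?_
  filter_upwards [eventually_exists_qexp_eq] with r ⟨σ, hσ, hr⟩
  filter_upwards [eventually_exists_qexp_eq] with q ⟨τ, hτ, hq⟩
  simpa [hF τ hτ σ hσ, ← hq, ← hr, mul_comm, mul_left_comm, mul_assoc] using ha τ hτ σ hσ

lemma coeff_eq (ha : HasDoubleQExpansion F a) (ha' : HasDoubleQExpansion F' a')
    (hF : ∀ τ ∈ UHP, ∀ σ ∈ UHP, F τ σ = F' τ σ) : a = a' := by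
  have coeff_sub := (ha.add ha'.neg).coeff_eq_zero fun τ hτ σ hσ ↦ by
    rw [hF τ hτ σ hσ, add_neg_cancel]
  ext n m
  exact eq_of_sub_eq_zero (by simpa [sub_eq_add_neg] using congr_fun₂ coeff_sub n m)

lemma coeff_antisymm (ha : HasDoubleQExpansion F a)
    (hanti : ∀ τ ∈ UHP, ∀ σ ∈ UHP, F τ σ = -F σ τ) (n m : ℕ) : a n m = -a m n :=
  congr_fun₂ (ha.coeff_eq ha.swap.neg hanti) n m

lemma coeff_three_term (ha : HasDoubleQExpansion F a)
    (hadd : ∀ τ ∈ UHP, ∀ σ ∈ UHP, F τ σ = F τ (τ + σ) + F (τ + σ) σ) (n m : ℕ) :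
    a n m = (if m ≤ n then a (n - m) m else 0) + (if n ≤ m then a n (m - n) else 0) :=
  congr_fun₂ (ha.coeff_eq (ha.comp_add_right.add ha.comp_add_left) hadd) n m

lemma coeff_eq_zero_of_pos (ha : HasDoubleQExpansion F a)
    (hanti : ∀ τ ∈ UHP, ∀ σ ∈ UHP, F τ σ = -F σ τ)
    (hadd : ∀ τ ∈ UHP, ∀ σ ∈ UHP, F τ σ = F τ (τ + σ) + F (τ + σ) σ) {n m : ℕ}
    (hn : 0 < n) (hm : 0 < m) : a n m = 0 := by
  rw [eq_apply_gcd_gcd_of_add_invariant (a := a) ?_ ?_ hn hm]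
  · exact self_eq_neg.1 (ha.coeff_antisymm hanti _ _)
  · intro i j hi
    simpa [hi.ne'] using ha.coeff_three_term hadd (i + j) j
  · intro i j hj
    simpa [hj.ne'] using ha.coeff_three_term hadd i (i + j)

lemma summable_coeff_zero_right (ha : HasDoubleQExpansion F a) {τ : ℂ} (hτ : τ ∈ UHP) :
    Summable fun n ↦ a n 0 * qexp τ ^ n := by
  simpa [Function.comp_def] using
    (ha τ hτ I I_mem_UHP).summable.comp_injective (Prod.mk_left_injective 0)

lemma qSeries_fst {c : ℕ → ℂ} (hc : ∀ τ ∈ UHP, Summable fun n ↦ c n * qexp τ ^ n) :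
    HasDoubleQExpansion (fun τ _ ↦ qSeries c τ) (fun n m ↦ if m = 0 then c n else 0) := by
  intro τ hτ σ _
  refine ((Prod.mk_left_injective 0).hasSum_iff ?_).1 ?_
  · rintro ⟨n, m⟩ h
    have hm : m ≠ 0 := fun hm ↦ h ⟨n, by rw [hm]⟩
    simp [hm]
  · simpa [Function.comp_def, qSeries] using (hc τ hτ).hasSum

lemma eq_qSeries_sub_qSeries (ha : HasDoubleQExpansion F a)
    (hanti : ∀ τ ∈ UHP, ∀ σ ∈ UHP, F τ σ = -F σ τ)
    (hadd : ∀ τ ∈ UHP, ∀ σ ∈ UHP, F τ σ = F τ (τ + σ) + F (τ + σ) σ) {τ σ : ℂ}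
    (hτ : τ ∈ UHP) (hσ : σ ∈ UHP) :
    F τ σ = qSeries (fun n ↦ a n 0) τ - qSeries (fun n ↦ a n 0) σ := by
  have expansion_fst := qSeries_fst (c := fun n ↦ a n 0) fun τ ↦ ha.summable_coeff_zero_right
  have coeff_on_axes :
      a = fun n m ↦ (if m = 0 then a n 0 else 0) + -(if n = 0 then a m 0 else 0) := by
    have corner : a 0 0 = 0 := self_eq_neg.1 (ha.coeff_antisymm hanti 0 0)
    ext n m
    rcases n.eq_zero_or_pos with rfl | hn <;> rcases m.eq_zero_or_pos with rfl | hm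
    · simp [corner]
    · simpa [hm.ne'] using ha.coeff_antisymm hanti 0 m
    · simp [hn.ne']
    · simp [hn.ne', hm.ne', ha.coeff_eq_zero_of_pos hanti hadd hn hm]
  have expansion_sub := expansion_fst.add expansion_fst.swap.neg
  rw [← coeff_on_axes] at expansion_sub
  rw [(ha τ hτ σ hσ).unique (expansion_sub τ hτ σ hσ), sub_eq_add_neg]

end HasDoubleQExpansion

section Cocycle

lemma mul_one_sub_eq_of_cocycle {M R : Type*} [CommMagma M] [CommRing R] {h χ : M → R} {x y : M}
    (hxy : h (x * y) = h x + χ x * h y) (hyx : h (y * x) = h y + χ y * h x) :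
    h x * (1 - χ y) = h y * (1 - χ x) := by
  rw [mul_comm y x, hxy] at hyx
  linear_combination hyx

lemma one_sub_zpow_ne_zero {K : Type*} [NormedDivisionRing K] {k : ℤ} (hk : k ≠ 0) {x : K}
    (hx : 1 < ‖x‖) : 1 - x ^ k ≠ 0 := by
  intro h
  have norm_zpow_eq : ‖x‖ ^ k = 1 := by rw [← norm_zpow, ← sub_eq_zero.1 h, norm_one]
  exact hk ((zpow_eq_one_iff_right₀ (norm_nonneg x) hx.ne').1 norm_zpow_eq)

lemma exists_eq_mul_one_sub_zpow_of_cocycle {k : ℤ} (hk : k ≠ 0) {h : ℂ → ℂ}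
    (hh : ∀ τ ∈ UHP, ∀ ρ ∈ UHP, τ * ρ ∈ UHP → h (τ * ρ) = h τ + τ ^ k * h ρ) :
    ∃ c : ℂ, ∀ τ ∈ UHP, h τ = c * (1 - τ ^ k) := by
  have comparison {τ ρ : ℂ} (hτ : τ ∈ UHP) (hρ : ρ ∈ UHP) (hτρ : τ * ρ ∈ UHP) :
      h τ * (1 - ρ ^ k) = h ρ * (1 - τ ^ k) :=
    mul_one_sub_eq_of_cocycle (χ := (· ^ k)) (hh τ hτ ρ hρ hτρ) (hh ρ hρ τ hτ (by rwa [mul_comm]))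
  have base_mem : 2 * I ∈ UHP := by simp [UHP]
  have base_ne : 1 - (2 * I) ^ k ≠ 0 := one_sub_zpow_ne_zero hk (by simp)
  refine ⟨h (2 * I) / (1 - (2 * I) ^ k), fun ρ hρ ↦ ?_⟩
  -- `ρ * (2 * I)` may leave `H`, so compare both points with a common `τ`.
  obtain ⟨τ, hτ, hτ1, hτρ, hτb⟩ := exists_one_lt_norm_mul_mem_UHP hρ base_mem
  rw [div_mul_eq_mul_div, eq_div_iff base_ne]
  apply mul_right_cancel₀ (one_sub_zpow_ne_zero hk hτ1)
  linear_combination (1 - ρ ^ k) * comparison hτ base_mem hτb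
    - (1 - (2 * I) ^ k) * comparison hτ hρ hτρ

/-- The defect `g|S - g` of invariance under `S : τ ↦ -1/τ` in weight `k`. -/
noncomputable def inversionDefect (k : ℤ) (g : ℂ → ℂ) (τ : ℂ) : ℂ := τ ^ (-k) * g (-1 / τ) - g τ

lemma inversionDefect_mul {k : ℤ} {g : ℂ → ℂ}
    (hg : ∀ τ ∈ UHP, ∀ σ ∈ UHP, σ / τ ∈ UHP →
      g τ - g σ = τ ^ (-k) * (g (-1 / τ) - g (σ / τ)) + σ ^ (-k) * (g (-(τ / σ)) - g (-1 / σ)))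
    {τ ρ : ℂ} (hτ : τ ∈ UHP) (hρ : ρ ∈ UHP) (hτρ : τ * ρ ∈ UHP) :
    inversionDefect k g (τ * ρ) = inversionDefect k g τ + τ ^ (-k) * inversionDefect k g ρ := by
  have hτ0 := ne_zero_of_mem_UHP hτ
  have fst_quotient : τ * ρ / τ = ρ := mul_div_cancel_left₀ ρ hτ0
  have snd_quotient : -(τ / (τ * ρ)) = -1 / ρ := by rw [div_mul_cancel_left₀ hτ0, neg_div, one_div]
  have relation := hg τ hτ (τ * ρ) hτρ (fst_quotient.symm ▸ hρ)
  rw [fst_quotient, snd_quotient, mul_zpow] at relation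
  simp only [inversionDefect, mul_zpow]
  linear_combination relation

lemma inversion_add_const_of_inversionDefect_eq {k : ℤ} {g : ℂ → ℂ} {c τ : ℂ} (hτ : τ ≠ 0)
    (h : inversionDefect k g τ = c * (1 - τ ^ (-k))) : g (-1 / τ) + c = τ ^ k * (g τ + c) := by
  have cancel : τ ^ k * τ ^ (-k) = 1 := by
    rw [zpow_neg, mul_inv_cancel₀ (zpow_ne_zero k hτ)]
  unfold inversionDefect at h
  linear_combination τ ^ k * h + (-c - g (-1 / τ)) * cancel

end Cocycle

section Modularity

lemma isModularForm_of_inversion_of_translation {k : ℕ} {G : ℂ → ℂ}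
    (hol : DifferentiableOn ℂ G UHP) (hS : ∀ τ ∈ UHP, G (-1 / τ) = τ ^ k * G τ)
    (hT : ∀ τ ∈ UHP, G (τ + 1) = G τ) (hbdd : ∃ C : ℝ, ∀ τ ∈ UHP, 1 ≤ τ.im → ‖G τ‖ ≤ C) :
    IsModularForm k G := by
  refine ⟨hol, fun A τ hτ ↦ ?_, hbdd⟩
  have slash_iff (γ : Matrix.SpecialLinearGroup (Fin 2) ℤ) (z : UpperHalfPlane) :=
    ModularForm.slash_action_eq'_iff k (fun z : UpperHalfPlane ↦ G z) γ z
  simp only [UpperHalfPlane.coe_specialLinearGroup_apply] at slash_iff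
  have invariant := SlashInvariantForm.slash_action_generators_SL2Z (k := k) (f := fun z ↦ G z)
    (funext fun z ↦ (slash_iff _ z).2 (by simpa [ModularGroup.S] using hS z z.im_pos))
    (funext fun z ↦ (slash_iff _ z).2 (by simpa [ModularGroup.T] using hT z z.im_pos)) A
  simpa using (slash_iff A ⟨τ, hτ⟩).1 (congrFun invariant _)

lemma isModularForm_qSeries_add_const {k : ℕ} {c : ℕ → ℂ} {C : ℂ}
    (hc : ∀ τ ∈ UHP, Summable fun n ↦ c n * qexp τ ^ n)
    (hC : ∀ τ ∈ UHP, inversionDefect k (qSeries c) τ = C * (1 - τ ^ (-(k : ℤ)))) :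
    IsModularForm k fun τ ↦ qSeries c τ + C := by
  refine isModularForm_of_inversion_of_translation ((differentiableOn_qSeries hc).add_const C)
    (fun τ hτ ↦ ?_) (fun τ _ ↦ by rw [qSeries_add_one])
    ⟨(∑' n, ‖c n * qexp I ^ n‖) + ‖C‖, fun τ _ hτ ↦ ?_⟩
  · exact_mod_cast inversion_add_const_of_inversionDefect_eq (ne_zero_of_mem_UHP hτ) (hC τ hτ)
  · calc ‖qSeries c τ + C‖ ≤ ‖qSeries c τ‖ + ‖C‖ := norm_add_le _ _
      _ ≤ (∑' n, ‖c n * qexp I ^ n‖) + ‖C‖ := by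
        gcongr
        exact norm_qSeries_le (hc I I_mem_UHP) (by simpa using hτ)

end Modularity

theorem three_term_relations_imply_difference_of_modular_form_general
    {k : ℕ} (hk : 0 < k) {Z : ℂ → ℂ → ℂ} {a : ℕ → ℕ → ℂ} (hexp : HasDoubleQExpansion Z a)
    (hanti : ∀ τ ∈ UHP, ∀ σ ∈ UHP, Z τ σ = -Z σ τ)
    (h3a : ∀ τ ∈ UHP, ∀ σ ∈ UHP, Z τ σ = Z τ (τ + σ) + Z (τ + σ) σ)
    (h3b : ∀ τ ∈ UHP, ∀ σ ∈ UHP, σ / τ ∈ UHP →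
      Z τ σ = τ ^ (-(k : ℤ)) * Z (-1 / τ) (σ / τ) +
        σ ^ (-(k : ℤ)) * Z (-(τ / σ)) (-1 / σ)) :
    ∃ G : ℂ → ℂ, IsModularForm k G ∧ ∀ τ ∈ UHP, ∀ σ ∈ UHP, Z τ σ = G τ - G σ := by
  let g := qSeries fun n ↦ a n 0
  have Z_eq {τ σ : ℂ} (hτ : τ ∈ UHP) (hσ : σ ∈ UHP) : Z τ σ = g τ - g σ :=
    hexp.eq_qSeries_sub_qSeries hanti h3a hτ hσ
  have g_relation (τ) (hτ : τ ∈ UHP) (σ) (hσ : σ ∈ UHP) (hστ : σ / τ ∈ UHP) :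
      g τ - g σ = τ ^ (-(k : ℤ)) * (g (-1 / τ) - g (σ / τ)) +
        σ ^ (-(k : ℤ)) * (g (-(τ / σ)) - g (-1 / σ)) := by
    have hτσ : -(τ / σ) ∈ UHP := by simpa [neg_div] using neg_one_div_mem_UHP hστ
    rw [← Z_eq hτ hσ, ← Z_eq (neg_one_div_mem_UHP hτ) hστ, ← Z_eq hτσ (neg_one_div_mem_UHP hσ),
      h3b τ hτ σ hσ hστ]
  obtain ⟨C, hC⟩ := exists_eq_mul_one_sub_zpow_of_cocycle (by omega : -(k : ℤ) ≠ 0)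
    fun τ hτ ρ hρ ↦ inversionDefect_mul g_relation hτ hρ
  refine ⟨fun τ ↦ g τ + C,
    isModularForm_qSeries_add_const (fun τ ↦ hexp.summable_coeff_zero_right) hC, ?_⟩
  intro τ hτ σ hσ
  rw [Z_eq hτ hσ, add_sub_add_right_eq_sub]

/-- An antisymmetric holomorphic function on `H × H` with an absolutely
convergent double `q`-expansion which satisfies the two three-term relations is a
difference `G(τ) - G(σ)` of a modular form `G` of weight `k`. -/
theorem three_term_relations_imply_difference_of_modular_form
    (k : ℕ) (hk : 0 < k) (hke : Even k) (Z : ℂ → ℂ → ℂ)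
    (hol : DifferentiableOn ℂ (fun p : ℂ × ℂ => Z p.1 p.2) (UHP ×ˢ UHP))
    (a : ℕ → ℕ → ℂ)
    (hexp : ∀ τ ∈ UHP, ∀ σ ∈ UHP,
      Summable (fun p : ℕ × ℕ => ‖a p.1 p.2 * qexp τ ^ p.1 * qexp σ ^ p.2‖) ∧
      HasSum (fun p : ℕ × ℕ => a p.1 p.2 * qexp τ ^ p.1 * qexp σ ^ p.2) (Z τ σ))
    (hanti : ∀ τ ∈ UHP, ∀ σ ∈ UHP, Z τ σ = -Z σ τ)
    (h3a : ∀ τ ∈ UHP, ∀ σ ∈ UHP, Z τ σ = Z τ (τ + σ) + Z (τ + σ) σ)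
    (h3b : ∀ τ ∈ UHP, ∀ σ ∈ UHP, σ / τ ∈ UHP →
      Z τ σ = τ ^ (-(k : ℤ)) * Z (-1 / τ) (σ / τ) +
        σ ^ (-(k : ℤ)) * Z (-(τ / σ)) (-1 / σ)) :
    ∃ G : ℂ → ℂ, IsModularForm k G ∧ ∀ τ ∈ UHP, ∀ σ ∈ UHP, Z τ σ = G τ - G σ :=
  three_term_relations_imply_difference_of_modular_form_general hk
    (fun τ hτ σ hσ ↦ (hexp τ hτ σ hσ).2) hanti h3a h3b
end

section
/- For every z ∈ ℂ which is not a nonpositive integer, the Euler gamma function is recovered from the elliptic gamma function by the iterated limit Γ(z) = lim_{σ→0} lim_{τ→i∞} θ₀(σ,τ)^{1−z} · Γ(σz, τ, σ)/Γ(σ, τ, σ), where the inner limit is taken as Im τ → ∞, the outer limit is taken as σ → 0 along the positive imaginary axis, and the complex power θ₀(σ,τ)^{1−z} is taken with the principal branch of the logarithm. -/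
open Complex Filter Topology

/-!
As `τ → i∞` the double products degenerate to `q`-Pochhammer symbols with base `r = e ^ (2πiσ)`:
`θ₀(σ, τ) → 1 - r` and `Γ(w, τ, σ) → 1 / (e ^ (2πiw); r)_∞`. The inner limit is therefore
Jackson's `q`-gamma function at the real base `r`, and it remains to let `r → 1`.

For this, `1 / Γ_q(z) = [z]_q ∏ (1 + [z]_q X_n) (1 + X_n) ^ (-z)` with `X_n = q ^ n / [n]_q`, whose
value at `q = 1` is Euler's product for `1 / Γ(z)`. Working with reciprocals leaves no denominator
that could vanish. The limit can be taken factor by factor because the factors are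
`1 + O(1 / n ^ 2)` uniformly in `q`: the terms of first order cancel up to `([z]_q - z) X_n`, where
`[z]_q - z = O(1 - q)` and `(1 - q) X_n ≤ 2 / n ^ 2`.
-/

/-! ### `q`-Pochhammer symbols -/

section qPochhammer

variable {𝕜 : Type*} [NormedField 𝕜]

theorem hasProd_inv_one_add_of_summable [CompleteSpace 𝕜] {ι : Type*} {f : ι → 𝕜}
    (hf : Summable fun i ↦ ‖f i‖) :
    HasProd (fun i ↦ (1 + f i)⁻¹) (∏' i, (1 + f i))⁻¹ := by
  by_cases h : ∃ i, 1 + f i = 0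
  · rw [tprod_of_exists_eq_zero h, inv_zero]
    exact hasProd_zero_of_exists_eq_zero (h.imp fun i hi ↦ by rw [hi, inv_zero])
  · push Not at h
    exact (multipliable_one_add_of_summable hf).hasProd.inv₀
      (tprod_one_add_ne_zero_of_summable h hf)

/-- The infinite `q`-Pochhammer symbol `(x; q)_∞`. -/
noncomputable def qPochhammer (x q : 𝕜) : 𝕜 :=
  ∏' n : ℕ, (1 + -(q ^ n * x))

/-- The double infinite `q`-Pochhammer symbol `(x; q, r)_∞`. -/
noncomputable def doubleQPochhammer (x q r : 𝕜) : 𝕜 :=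
  ∏' p : ℕ × ℕ, (1 + -(q ^ p.1 * r ^ p.2 * x))

theorem summable_norm_neg_pow_mul (x : 𝕜) {q : 𝕜} (hq : ‖q‖ < 1) :
    Summable fun n : ℕ ↦ ‖-(q ^ n * x)‖ := by
  simpa only [norm_neg, norm_mul, norm_pow] using
    (summable_geometric_of_lt_one (norm_nonneg q) hq).mul_right ‖x‖

theorem summable_norm_neg_pow_mul_pow_mul (x : 𝕜) {q r : 𝕜} (hq : ‖q‖ < 1) (hr : ‖r‖ < 1) :
    Summable fun p : ℕ × ℕ ↦ ‖-(q ^ p.1 * r ^ p.2 * x)‖ := by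
  simpa only [norm_neg, norm_mul, norm_pow] using
    ((summable_geometric_of_lt_one (norm_nonneg q) hq).mul_of_nonneg
      (summable_geometric_of_lt_one (norm_nonneg r) hr)
      (fun _ ↦ by positivity) (fun _ ↦ by positivity)).mul_right ‖x‖

@[simp]
theorem qPochhammer_zero_left (q : 𝕜) : qPochhammer 0 q = 1 := by
  simp [qPochhammer]

@[simp]
theorem qPochhammer_zero_right (x : 𝕜) : qPochhammer x 0 = 1 - x := by
  rw [qPochhammer, tprod_eq_mulSingle 0 fun n hn ↦ by simp [hn], pow_zero, one_mul,
    ← sub_eq_add_neg]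

@[simp]
theorem doubleQPochhammer_zero_middle (x r : 𝕜) :
    doubleQPochhammer x 0 r = qPochhammer x r := by
  have hinj : Function.Injective fun l : ℕ ↦ ((0 : ℕ), l) := Prod.mk_right_injective 0
  rw [doubleQPochhammer, qPochhammer, ← hinj.tprod_eq]
  · simp
  · rintro ⟨j, l⟩ hp
    have hj : j = 0 := by
      by_contra hj
      simp [hj] at hp
    exact ⟨l, by rw [hj]⟩

variable [CompleteSpace 𝕜]

theorem multipliable_qPochhammer (x : 𝕜) {q : 𝕜} (hq : ‖q‖ < 1) :
    Multipliable fun n : ℕ ↦ 1 + -(q ^ n * x) :=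
  multipliable_one_add_of_summable (summable_norm_neg_pow_mul x hq)

theorem qPochhammer_eq_mul (x : 𝕜) {q : 𝕜} (hq : ‖q‖ < 1) :
    qPochhammer x q = (1 - x) * qPochhammer (q * x) q := by
  have hshift (n : ℕ) : 1 + -(q ^ (n + 1) * x) = 1 + -(q ^ n * (q * x)) := by ring
  have hmul : Multipliable fun n : ℕ ↦ 1 + -(q ^ (n + 1) * x) := by
    simpa only [hshift] using multipliable_qPochhammer (q * x) hq
  rw [qPochhammer, tprod_eq_zero_mul' (f := fun n : ℕ ↦ 1 + -(q ^ n * x)) hmul, pow_zero, one_mul,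
    ← sub_eq_add_neg, tprod_congr hshift, qPochhammer]

theorem qPochhammer_self_ne_zero {q : 𝕜} (hq : ‖q‖ < 1) : qPochhammer q q ≠ 0 := by
  refine tprod_one_add_ne_zero_of_summable (fun n hn ↦ ?_) (summable_norm_neg_pow_mul q hq)
  have hpow : q ^ (n + 1) = 1 := by
    rw [pow_succ, ← add_neg_eq_zero.mp hn]
  have hlt := pow_lt_one₀ (norm_nonneg q) hq n.succ_ne_zero
  rw [← norm_pow, hpow, norm_one] at hlt
  exact hlt.false

theorem doubleQPochhammer_eq_zero_of_qPochhammer_eq_zero {x q r : 𝕜} (hr : ‖r‖ < 1)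
    (h : qPochhammer x r = 0) : doubleQPochhammer x q r = 0 := by
  obtain ⟨l, hl⟩ : ∃ l : ℕ, 1 + -(r ^ l * x) = 0 := by
    contrapose! h
    exact tprod_one_add_ne_zero_of_summable h (summable_norm_neg_pow_mul x hr)
  exact tprod_of_exists_eq_zero ⟨(0, l), by rw [pow_zero, one_mul, hl]⟩

theorem continuousAt_doubleQPochhammer (x : 𝕜) {q r : 𝕜} (hq : ‖q‖ < 1) (hr : ‖r‖ < 1) :
    ContinuousAt (fun p : 𝕜 × 𝕜 × 𝕜 ↦ doubleQPochhammer p.1 p.2.1 p.2.2) (x, q, r) := by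
  obtain ⟨ρ, hρ, hρ1⟩ := exists_between (max_lt hq hr)
  obtain ⟨hqρ, hrρ⟩ := max_lt_iff.mp hρ
  have hρ0 : 0 ≤ ρ := (norm_nonneg q).trans hqρ.le
  have hgeom := summable_geometric_of_lt_one hρ0 hρ1
  have hbound : Summable fun m : ℕ × ℕ ↦ ρ ^ m.1 * ρ ^ m.2 * (‖x‖ + 1) :=
    (hgeom.mul_of_nonneg hgeom (fun _ ↦ by positivity) fun _ ↦ by positivity).mul_right _
  refine tendsto_tprod_one_add_of_dominated_convergence hbound (fun m ↦ ?_) ?_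
  · have : Continuous fun p : 𝕜 × 𝕜 × 𝕜 ↦ -(p.2.1 ^ m.1 * p.2.2 ^ m.2 * p.1) := by fun_prop
    exact this.tendsto (x, q, r)
  · have hx : ∀ᶠ p : 𝕜 × 𝕜 × 𝕜 in 𝓝 (x, q, r), ‖p.1‖ < ‖x‖ + 1 :=
      (by fun_prop : Continuous fun p : 𝕜 × 𝕜 × 𝕜 ↦ ‖p.1‖).continuousAt.eventually_lt_const
        (lt_add_one _)
    have hq' : ∀ᶠ p : 𝕜 × 𝕜 × 𝕜 in 𝓝 (x, q, r), ‖p.2.1‖ < ρ :=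
      (by fun_prop : Continuous fun p : 𝕜 × 𝕜 × 𝕜 ↦ ‖p.2.1‖).continuousAt.eventually_lt_const hqρ
    have hr' : ∀ᶠ p : 𝕜 × 𝕜 × 𝕜 in 𝓝 (x, q, r), ‖p.2.2‖ < ρ :=
      (by fun_prop : Continuous fun p : 𝕜 × 𝕜 × 𝕜 ↦ ‖p.2.2‖).continuousAt.eventually_lt_const hrρ
    filter_upwards [hx, hq', hr'] with p hpx hpq hpr m
    rw [norm_neg, norm_mul, norm_mul, norm_pow, norm_pow]
    gcongr

theorem continuousAt_qPochhammer (x : 𝕜) {q : 𝕜} (hq : ‖q‖ < 1) :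
    ContinuousAt (fun p : 𝕜 × 𝕜 ↦ qPochhammer p.1 p.2) (x, q) := by
  have hmap : ContinuousAt (fun p : 𝕜 × 𝕜 ↦ (p.1, (0 : 𝕜), p.2)) (x, q) := by fun_prop
  simpa only [Function.comp_def, doubleQPochhammer_zero_middle] using
    (continuousAt_doubleQPochhammer x (norm_zero.trans_lt one_pos) hq).comp
      (f := fun p : 𝕜 × 𝕜 ↦ (p.1, (0 : 𝕜), p.2)) hmap

end qPochhammer

/-! ### The limit `τ → i∞` -/

theorem norm_qexp (τ : ℂ) : ‖qexp τ‖ = Real.exp (-(2 * Real.pi * τ.im)) := by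
  rw [qexp, Complex.norm_exp]
  simp

theorem norm_qexp_lt_one {τ : ℂ} (hτ : 0 < τ.im) : ‖qexp τ‖ < 1 := by
  rw [norm_qexp, Real.exp_lt_one_iff, neg_lt_zero]
  positivity

theorem tendsto_qexp_comap_im_atTop : Tendsto qexp (comap im atTop) (𝓝 0) := by
  rw [tendsto_zero_iff_norm_tendsto_zero]
  simp only [norm_qexp]
  exact Real.tendsto_exp_neg_atTop_nhds_zero.comp
    (tendsto_comap.const_mul_atTop Real.two_pi_pos)

theorem cexp_neg_two_pi_I_mul (z : ℂ) : cexp (-(2 * Real.pi * I) * z) = (qexp z)⁻¹ := by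
  rw [qexp, ← Complex.exp_neg, neg_mul]

theorem theta0_eq_qPochhammer (z : ℂ) {τ : ℂ} (hτ : 0 < τ.im) :
    theta0 z τ = qPochhammer (qexp τ * (qexp z)⁻¹) (qexp τ) * qPochhammer (qexp z) (qexp τ) := by
  have hq := norm_qexp_lt_one hτ
  rw [qPochhammer, qPochhammer,
    ← (multipliable_qPochhammer _ hq).tprod_mul (multipliable_qPochhammer _ hq), theta0]
  refine tprod_congr fun j ↦ ?_
  rw [cexp_neg_two_pi_I_mul, ← qexp]
  ring

theorem ellipticGamma_eq_doubleQPochhammer (z : ℂ) {τ σ : ℂ} (hτ : 0 < τ.im) (hσ : 0 < σ.im) :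
    ellipticGamma z τ σ =
      doubleQPochhammer (qexp τ * qexp σ * (qexp z)⁻¹) (qexp τ) (qexp σ) /
        doubleQPochhammer (qexp z) (qexp τ) (qexp σ) := by
  have hsum (x : ℂ) :=
    summable_norm_neg_pow_mul_pow_mul x (norm_qexp_lt_one hτ) (norm_qexp_lt_one hσ)
  have hprod := (multipliable_one_add_of_summable
    (hsum (qexp τ * qexp σ * (qexp z)⁻¹))).hasProd.mul
      (hasProd_inv_one_add_of_summable (hsum (qexp z)))
  rw [div_eq_mul_inv, doubleQPochhammer, doubleQPochhammer, ← hprod.tprod_eq, ellipticGamma]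
  refine tprod_congr fun p ↦ ?_
  rw [cexp_neg_two_pi_I_mul, ← qexp, div_eq_mul_inv]
  ring

theorem eventually_im_pos_comap_im_atTop : ∀ᶠ τ : ℂ in comap im atTop, 0 < τ.im :=
  tendsto_comap.eventually_gt_atTop 0

theorem tendsto_theta0_comap_im_atTop (z : ℂ) :
    Tendsto (theta0 z) (comap im atTop) (𝓝 (1 - qexp z)) := by
  have hnum : Tendsto (fun τ ↦ (qexp τ * (qexp z)⁻¹, qexp τ)) (comap im atTop) (𝓝 (0, 0)) := by
    simpa only [zero_mul] using
      (tendsto_qexp_comap_im_atTop.mul_const (qexp z)⁻¹).prodMk_nhds tendsto_qexp_comap_im_atTop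
  have hden : Tendsto (fun τ ↦ (qexp z, qexp τ)) (comap im atTop) (𝓝 (qexp z, 0)) :=
    tendsto_const_nhds.prodMk_nhds tendsto_qexp_comap_im_atTop
  have hcont (x : ℂ) := continuousAt_qPochhammer x (norm_zero.trans_lt one_pos)
  have hlim := ((hcont 0).tendsto.comp hnum).mul ((hcont (qexp z)).tendsto.comp hden)
  rw [qPochhammer_zero_left, qPochhammer_zero_right, one_mul] at hlim
  exact hlim.congr' (eventually_im_pos_comap_im_atTop.mono fun τ hτ ↦
    (theta0_eq_qPochhammer z hτ).symm)

theorem tendsto_ellipticGamma_comap_im_atTop (z : ℂ) {σ : ℂ} (hσ : 0 < σ.im) :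
    Tendsto (fun τ ↦ ellipticGamma z τ σ) (comap im atTop)
      (𝓝 (qPochhammer (qexp z) (qexp σ))⁻¹) := by
  have hr := norm_qexp_lt_one hσ
  have hnum : Tendsto (fun τ ↦ (qexp τ * qexp σ * (qexp z)⁻¹, qexp τ, qexp σ)) (comap im atTop)
      (𝓝 (0, 0, qexp σ)) := by
    simpa only [zero_mul] using
      ((tendsto_qexp_comap_im_atTop.mul_const (qexp σ)).mul_const (qexp z)⁻¹).prodMk_nhds
        (tendsto_qexp_comap_im_atTop.prodMk_nhds tendsto_const_nhds)
  have hden : Tendsto (fun τ ↦ (qexp z, qexp τ, qexp σ)) (comap im atTop)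
      (𝓝 (qexp z, 0, qexp σ)) :=
    tendsto_const_nhds.prodMk_nhds (tendsto_qexp_comap_im_atTop.prodMk_nhds tendsto_const_nhds)
  have hcont (x : ℂ) := continuousAt_doubleQPochhammer x (norm_zero.trans_lt one_pos) hr
  have hlim_num := (hcont 0).tendsto.comp hnum
  have hlim_den := (hcont (qexp z)).tendsto.comp hden
  rw [doubleQPochhammer_zero_middle] at hlim_num hlim_den
  rw [qPochhammer_zero_left] at hlim_num
  by_cases hzero : qPochhammer (qexp z) (qexp σ) = 0
  · -- The vanishing factor does not involve `τ`, so both sides are the junk value `1 / 0 = 0`.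
    have hvanish (τ : ℂ) := doubleQPochhammer_eq_zero_of_qPochhammer_eq_zero hr hzero (q := qexp τ)
    rw [hzero, inv_zero]
    exact tendsto_const_nhds.congr' (eventually_im_pos_comap_im_atTop.mono fun τ hτ ↦ by
      simp only [ellipticGamma_eq_doubleQPochhammer z hτ hσ, hvanish, div_zero])
  · rw [← one_div]
    exact (hlim_num.div hlim_den hzero).congr' (eventually_im_pos_comap_im_atTop.mono fun τ hτ ↦
      (ellipticGamma_eq_doubleQPochhammer z hτ hσ).symm)

/-! ### The `q`-gamma function -/

/-- The `q`-number `[z]_q`, with the complex argument `z` allowed. -/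
noncomputable def qNumber (q : ℝ) (z : ℂ) : ℂ :=
  (1 - (q : ℂ) ^ z) / (1 - q)

/-- Jackson's `q`-gamma function `Γ_q(z)`, for `0 < q < 1`. -/
noncomputable def qGamma (q : ℝ) (z : ℂ) : ℂ :=
  (1 - q : ℂ) ^ (1 - z) * (qPochhammer (q : ℂ) q / qPochhammer ((q : ℂ) ^ z) q)

/-- The relative increment `([n + 1]_q - [n]_q) / [n]_q` of the `q`-integers. They are written as
geometric sums so that `q = 1` is included, where the increment is `1 / n`. -/
noncomputable def qIncrement (q : ℝ) (n : ℕ) : ℝ :=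
  q ^ n / ∑ i ∈ Finset.range n, q ^ i

/-- The general factor of Euler's product `1 / Γ(z) = z ∏ (1 + z / n) (1 + 1 / n) ^ (-z)`, where
`1 / n` becomes `x` and the first `z` becomes `c`. For `c = [z]_q` and `x` the `q`-increment, these
are the factors of the same product for the `q`-gamma function. -/
noncomputable def eulerFactor (c z : ℂ) (x : ℝ) : ℂ :=
  (1 + c * x) * ((1 + x : ℝ) : ℂ) ^ (-z)

theorem exists_norm_sub_taylor_one_le {E : Type*} [NormedAddCommGroup E] [NormedSpace ℂ E]
    [CompleteSpace E] {f : ℂ → E} {s K : Set ℂ} {c : ℂ} (hs : s ∈ 𝓝 c)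
    (hf : DifferentiableOn ℂ f s) (hK : IsCompact K) (hKs : K ⊆ s) :
    ∃ C, ∀ x ∈ K, ‖f x - f c - (x - c) • deriv f c‖ ≤ C * ‖x - c‖ ^ 2 := by
  have hcont : ContinuousOn (dslope (dslope f c) c) K :=
    (((Complex.differentiableOn_dslope hs).mpr
      ((Complex.differentiableOn_dslope hs).mpr hf)).mono hKs).continuousOn
  obtain ⟨C, hC⟩ := hK.exists_bound_of_continuousOn hcont
  refine ⟨C, fun x hx ↦ ?_⟩
  have hremainder : f x - f c - (x - c) • deriv f c =
      (x - c) • (x - c) • dslope (dslope f c) c x := by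
    rw [sub_smul_dslope, smul_sub, sub_smul_dslope, dslope_same]
  rw [hremainder, norm_smul, norm_smul, ← mul_assoc, ← sq, mul_comm]
  gcongr
  exact hC x hx

theorem exists_norm_cpow_sub_taylor_one_le (w : ℂ) :
    ∃ C, 0 ≤ C ∧ ∀ x ∈ Set.Icc (1 / 2 : ℝ) 2,
      ‖(x : ℂ) ^ w - 1 - w * (x - 1)‖ ≤ C * (x - 1) ^ 2 := by
  have hK : IsCompact (((↑) : ℝ → ℂ) '' Set.Icc (1 / 2 : ℝ) 2) :=
    isCompact_Icc.image continuous_ofReal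
  have hKs : ((↑) : ℝ → ℂ) '' Set.Icc (1 / 2 : ℝ) 2 ⊆ slitPlane := by
    rintro _ ⟨x, hx, rfl⟩
    exact ofReal_mem_slitPlane.mpr (one_half_pos.trans_le hx.1)
  have hderiv : HasDerivAt (fun x : ℂ ↦ x ^ w) w 1 := by
    simpa using (hasDerivAt_id (1 : ℂ)).cpow_const (c := w) one_mem_slitPlane
  obtain ⟨C, hC⟩ := exists_norm_sub_taylor_one_le (f := fun x : ℂ ↦ x ^ w)
    (isOpen_slitPlane.mem_nhds one_mem_slitPlane)
    (fun x hx ↦ (differentiableAt_id.cpow_const hx).differentiableWithinAt) hK hKs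
  have hbound : ∀ x ∈ Set.Icc (1 / 2 : ℝ) 2,
      ‖(x : ℂ) ^ w - 1 - w * (x - 1)‖ ≤ C * (x - 1) ^ 2 := by
    intro x hx
    have h := hC x (Set.mem_image_of_mem _ hx)
    rwa [hderiv.deriv, one_cpow, smul_eq_mul, mul_comm, ← ofReal_one, ← ofReal_sub, norm_real,
      Real.norm_eq_abs, sq_abs, ofReal_sub, ofReal_one] at h
  refine ⟨C, ?_, hbound⟩
  simpa using (norm_nonneg _).trans (hbound 2 (by norm_num))

theorem exists_norm_qNumber_sub_le (z : ℂ) :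
    ∃ C, 0 ≤ C ∧ ∀ q ∈ Set.Ico (1 / 2 : ℝ) 1, ‖qNumber q z - z‖ ≤ C * (1 - q) := by
  obtain ⟨C, hC0, hC⟩ := exists_norm_cpow_sub_taylor_one_le z
  refine ⟨C, hC0, fun q hq ↦ ?_⟩
  have hq1 : 0 < 1 - q := sub_pos.mpr hq.2
  have hne : (1 - q : ℂ) ≠ 0 := by exact_mod_cast hq1.ne'
  have hdiff : qNumber q z - z = -((q : ℂ) ^ z - 1 - z * (q - 1)) / ((1 - q : ℝ) : ℂ) := by
    rw [qNumber, ofReal_sub, ofReal_one]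
    field_simp
    ring
  rw [hdiff, norm_div, norm_neg, Complex.norm_of_nonneg hq1.le, div_le_iff₀ hq1]
  calc ‖(q : ℂ) ^ z - 1 - z * (q - 1)‖ ≤ C * (q - 1) ^ 2 := hC q ⟨hq.1, by linarith [hq.2]⟩
    _ = C * (1 - q) * (1 - q) := by ring

theorem tendsto_qNumber (z : ℂ) : Tendsto (fun q ↦ qNumber q z) (𝓝[<] 1) (𝓝 z) := by
  obtain ⟨C, -, hC⟩ := exists_norm_qNumber_sub_le z
  have hzero : Tendsto (fun q : ℝ ↦ C * (1 - q)) (𝓝[<] 1) (𝓝 0) := by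
    have : Continuous fun q : ℝ ↦ C * (1 - q) := by fun_prop
    exact (this.tendsto' 1 0 (by simp)).mono_left nhdsWithin_le_nhds
  rw [tendsto_iff_norm_sub_tendsto_zero]
  exact squeeze_zero' (.of_forall fun _ ↦ norm_nonneg _)
    (mem_of_superset (Ico_mem_nhdsLT (by norm_num)) hC) hzero

theorem pow_mul_one_add_mul_le_one {q : ℝ} (hq : 0 ≤ q) (hq1 : q ≤ 1) (n : ℕ) :
    q ^ n * (1 + n * (1 - q)) ≤ 1 := by
  calc q ^ n * (1 + n * (1 - q)) ≤ q ^ n * (1 + (1 - q)) ^ n := by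
        gcongr
        exact one_add_mul_le_pow (by linarith) n
    _ = (q * (1 + (1 - q))) ^ n := (mul_pow _ _ _).symm
    _ ≤ 1 := pow_le_one₀ (by nlinarith) (by nlinarith [sq_nonneg (1 - q)])

theorem pow_mul_add_sq_le_geom_sum {q : ℝ} (hq : 0 ≤ q) (hq1 : q ≤ 1) (n : ℕ) :
    q ^ n * (n + (1 - q) * n ^ 2 / 2) ≤ ∑ i ∈ Finset.range n, q ^ i := by
  induction n with
  | zero => simp
  | succ n ih =>
    rw [geom_sum_succ]
    have hstep := pow_mul_one_add_mul_le_one hq hq1 (n + 1)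
    push_cast at hstep ⊢
    calc q ^ (n + 1) * (n + 1 + (1 - q) * (n + 1) ^ 2 / 2)
        = q * (q ^ n * (n + (1 - q) * n ^ 2 / 2)) + q ^ (n + 1) * (1 + (n + 1) * (1 - q))
          - q ^ (n + 1) * (1 - q) / 2 := by ring
      _ ≤ q * ∑ i ∈ Finset.range n, q ^ i + 1 := by
        have : 0 ≤ q ^ (n + 1) * (1 - q) / 2 := by
          have := sub_nonneg.mpr hq1
          positivity
        linarith [mul_le_mul_of_nonneg_left ih hq]

theorem qIncrement_nonneg {q : ℝ} (hq : 0 ≤ q) (n : ℕ) : 0 ≤ qIncrement q n := by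
  unfold qIncrement
  positivity

@[simp]
theorem qIncrement_one (n : ℕ) : qIncrement 1 n = 1 / n := by
  simp [qIncrement]

theorem qIncrement_mul_le_one {q : ℝ} (hq : 0 ≤ q) (hq1 : q ≤ 1) (n : ℕ) :
    qIncrement q n * n ≤ 1 := by
  rw [qIncrement, div_mul_eq_mul_div]
  refine div_le_one_of_le₀ ((le_trans ?_ (pow_mul_add_sq_le_geom_sum hq hq1 n))) (by positivity)
  have := sub_nonneg.mpr hq1
  gcongr
  exact le_add_of_nonneg_right (by positivity)

theorem one_sub_mul_qIncrement_mul_sq_le_two {q : ℝ} (hq : 0 ≤ q) (hq1 : q ≤ 1) (n : ℕ) :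
    (1 - q) * qIncrement q n * n ^ 2 ≤ 2 := by
  have hsum := pow_mul_add_sq_le_geom_sum hq hq1 n
  have hpow : 0 ≤ q ^ n * n := by positivity
  rw [qIncrement, mul_div_assoc', div_mul_eq_mul_div]
  refine div_le_of_le_mul₀ (by positivity) two_pos.le ?_
  linarith

theorem one_add_qIncrement {q : ℝ} (hq : 0 ≤ q) {n : ℕ} (hn : n ≠ 0) :
    1 + qIncrement q n = (∑ i ∈ Finset.range (n + 1), q ^ i) / ∑ i ∈ Finset.range n, q ^ i := by
  rw [qIncrement, one_add_div (geom_sum_pos hq hn).ne', Finset.sum_range_succ]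

theorem one_add_qNumber_mul_qIncrement {q : ℝ} (hq : 0 < q) (hq1 : q < 1) (z : ℂ) {n : ℕ}
    (hn : n ≠ 0) :
    1 + qNumber q z * qIncrement q n = (1 - (q : ℂ) ^ n * (q : ℂ) ^ z) / (1 - (q : ℂ) ^ n) := by
  have hq1' : (1 - q : ℂ) ≠ 0 := by exact_mod_cast (sub_pos.mpr hq1).ne'
  have hpow : (1 - (q : ℂ) ^ n) ≠ 0 := by
    exact_mod_cast (sub_pos.mpr (pow_lt_one₀ hq.le hq1 hn)).ne'
  have hsum : (∑ i ∈ Finset.range n, (q : ℂ) ^ i) = (1 - (q : ℂ) ^ n) / (1 - q) := by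
    rw [eq_div_iff hq1', geom_sum_mul_neg]
  rw [qNumber, qIncrement]
  push_cast
  rw [hsum]
  field_simp
  ring

theorem norm_one_add_cpow_le (w : ℂ) {x : ℝ} (hx : x ∈ Set.Icc (0 : ℝ) 1) :
    ‖((1 + x : ℝ) : ℂ) ^ w‖ ≤ 2 ^ ‖w‖ := by
  obtain ⟨hx0, hx1⟩ := hx
  rw [norm_cpow_eq_rpow_re_of_pos (by linarith)]
  calc (1 + x) ^ w.re ≤ (1 + x) ^ ‖w‖ :=
        Real.rpow_le_rpow_of_exponent_le (by linarith) (re_le_norm w)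
    _ ≤ 2 ^ ‖w‖ := by
      gcongr
      linarith

theorem exists_norm_eulerFactor_self_sub_one_le (z : ℂ) :
    ∃ M, 0 ≤ M ∧ ∀ x ∈ Set.Icc (0 : ℝ) 1, ‖eulerFactor z z x - 1‖ ≤ M * x ^ 2 := by
  obtain ⟨C, hC0, hC⟩ := exists_norm_cpow_sub_taylor_one_le (-z)
  refine ⟨‖z‖ ^ 2 + (1 + ‖z‖) * C, by positivity, fun x hx ↦ ?_⟩
  have hnorm : ‖(x : ℂ)‖ = x := Complex.norm_of_nonneg hx.1
  set e : ℂ := ((1 + x : ℝ) : ℂ) ^ (-z) - 1 + z * x with he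
  have he_le : ‖e‖ ≤ C * x ^ 2 := by
    convert hC (1 + x) ⟨by linarith [hx.1], by linarith [hx.2]⟩ using 2
    · rw [he, ofReal_add, ofReal_one]
      ring_nf
    · ring
  have hexpand : eulerFactor z z x - 1 = -z ^ 2 * x ^ 2 + (1 + z * x) * e := by
    rw [eulerFactor, he]
    ring
  calc ‖eulerFactor z z x - 1‖ ≤ ‖z‖ ^ 2 * x ^ 2 + (‖(1 : ℂ)‖ + ‖z * x‖) * ‖e‖ := by
        rw [hexpand]
        refine (norm_add_le _ _).trans ?_
        rw [norm_mul, norm_mul, norm_neg, norm_pow, norm_pow, hnorm]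
        gcongr
        exact norm_add_le _ _
    _ ≤ ‖z‖ ^ 2 * x ^ 2 + (1 + ‖z‖ * 1) * (C * x ^ 2) := by
      rw [norm_one, norm_mul, hnorm]
      gcongr
      exact hx.2
    _ = (‖z‖ ^ 2 + (1 + ‖z‖) * C) * x ^ 2 := by ring

theorem exists_norm_eulerFactor_sub_one_le (z : ℂ) :
    ∃ M, 0 ≤ M ∧ ∀ c, ∀ x ∈ Set.Icc (0 : ℝ) 1,
      ‖eulerFactor c z x - 1‖ ≤ M * (‖c - z‖ * x + x ^ 2) := by
  obtain ⟨M, hM0, hM⟩ := exists_norm_eulerFactor_self_sub_one_le z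
  refine ⟨2 ^ ‖-z‖ + M, by positivity, fun c x hx ↦ ?_⟩
  have hx0 := hx.1
  have hsplit : eulerFactor c z x - 1 =
      (c - z) * x * ((1 + x : ℝ) : ℂ) ^ (-z) + (eulerFactor z z x - 1) := by
    rw [eulerFactor, eulerFactor]
    ring
  calc ‖eulerFactor c z x - 1‖ ≤ ‖c - z‖ * x * 2 ^ ‖-z‖ + M * x ^ 2 := by
        rw [hsplit]
        refine norm_add_le_of_le ?_ (hM x hx)
        rw [norm_mul, norm_mul, Complex.norm_of_nonneg hx0]
        gcongr
        exact norm_one_add_cpow_le (-z) hx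
    _ ≤ (2 ^ ‖-z‖ + M) * (‖c - z‖ * x + x ^ 2) := by
      have : 0 ≤ 2 ^ ‖-z‖ * x ^ 2 + M * (‖c - z‖ * x) := by positivity
      linarith

theorem exists_norm_eulerFactor_qIncrement_sub_one_le (z : ℂ) {B : ℝ} (hB : 0 ≤ B) :
    ∃ M, ∀ q ∈ Set.Icc (0 : ℝ) 1, ∀ c, ‖c - z‖ ≤ B * (1 - q) → ∀ n : ℕ,
      ‖eulerFactor c z (qIncrement q (n + 1)) - 1‖ ≤ M * (1 / ((n + 1 : ℕ) : ℝ) ^ 2) := by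
  obtain ⟨M, hM0, hM⟩ := exists_norm_eulerFactor_sub_one_le z
  refine ⟨M * (B * 2 + 1), fun q hq c hc n ↦ ?_⟩
  obtain ⟨hq0, hq1⟩ := hq
  set x := qIncrement q (n + 1)
  have hn : (0 : ℝ) < (n + 1 : ℕ) := by positivity
  have hx0 : 0 ≤ x := qIncrement_nonneg hq0 _
  have hx : x ≤ 1 / (n + 1 : ℕ) := (le_div_iff₀ hn).mpr (qIncrement_mul_le_one hq0 hq1 _)
  have hx1 : x ≤ 1 := hx.trans ((div_le_one hn).mpr (by exact_mod_cast n.succ_pos))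
  have hqx : (1 - q) * x ≤ 2 / ((n + 1 : ℕ) : ℝ) ^ 2 :=
    (le_div_iff₀ (by positivity)).mpr (one_sub_mul_qIncrement_mul_sq_le_two hq0 hq1 _)
  calc ‖eulerFactor c z x - 1‖ ≤ M * (‖c - z‖ * x + x ^ 2) := hM c x ⟨hx0, hx1⟩
    _ ≤ M * (B * ((1 - q) * x) + x ^ 2) := by
      rw [← mul_assoc]
      gcongr
    _ ≤ M * (B * (2 / ((n + 1 : ℕ) : ℝ) ^ 2) + (1 / (n + 1 : ℕ)) ^ 2) := by gcongr
    _ = M * (B * 2 + 1) * (1 / ((n + 1 : ℕ) : ℝ) ^ 2) := by ring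

theorem summable_one_div_nat_succ_sq : Summable fun n : ℕ ↦ 1 / ((n + 1 : ℕ) : ℝ) ^ 2 :=
  (summable_nat_add_iff 1).mpr (Real.summable_one_div_nat_pow.mpr one_lt_two)

theorem multipliable_eulerFactor_qIncrement {z c : ℂ} {q B : ℝ} (hq : q ∈ Set.Icc (0 : ℝ) 1)
    (hB : 0 ≤ B) (hc : ‖c - z‖ ≤ B * (1 - q)) :
    Multipliable fun n : ℕ ↦ eulerFactor c z (qIncrement q (n + 1)) := by
  obtain ⟨M, hM⟩ := exists_norm_eulerFactor_qIncrement_sub_one_le z hB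
  have hsum : Summable fun n : ℕ ↦ ‖eulerFactor c z (qIncrement q (n + 1)) - 1‖ :=
    (summable_one_div_nat_succ_sq.mul_left M).of_nonneg_of_le (fun _ ↦ norm_nonneg _) (hM q hq c hc)
  simpa only [add_sub_cancel] using multipliable_one_add_of_summable hsum

theorem tendsto_eulerFactor {ι : Type*} {l : Filter ι} {c : ι → ℂ} {x : ι → ℝ} {c₀ : ℂ} {x₀ : ℝ}
    (z : ℂ) (hc : Tendsto c l (𝓝 c₀)) (hx : Tendsto x l (𝓝 x₀)) (hx₀ : -1 < x₀) :
    Tendsto (fun i ↦ eulerFactor (c i) z (x i)) l (𝓝 (eulerFactor c₀ z x₀)) := by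
  have hslit : ((1 + x₀ : ℝ) : ℂ) ∈ slitPlane := ofReal_mem_slitPlane.mpr (by linarith)
  exact (tendsto_const_nhds.add (hc.mul hx.ofReal)).mul
    ((tendsto_const_nhds.add hx).ofReal.cpow tendsto_const_nhds hslit)

theorem tendsto_qIncrement_one {n : ℕ} (hn : n ≠ 0) :
    Tendsto (fun q ↦ qIncrement q n) (𝓝 1) (𝓝 (qIncrement 1 n)) := by
  have hden : ContinuousAt (fun q : ℝ ↦ ∑ i ∈ Finset.range n, q ^ i) 1 := by fun_prop
  exact (continuousAt_id.pow n).div hden (geom_sum_pos zero_le_one hn).ne'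

theorem tendsto_tprod_eulerFactor (z : ℂ) :
    Tendsto (fun q ↦ ∏' n : ℕ, eulerFactor (qNumber q z) z (qIncrement q (n + 1))) (𝓝[<] 1)
      (𝓝 (∏' n : ℕ, eulerFactor z z (qIncrement 1 (n + 1)))) := by
  obtain ⟨B, hB0, hB⟩ := exists_norm_qNumber_sub_le z
  obtain ⟨M, hM⟩ := exists_norm_eulerFactor_qIncrement_sub_one_le z hB0
  have hterm (n : ℕ) : Tendsto (fun q ↦ eulerFactor (qNumber q z) z (qIncrement q (n + 1)) - 1)
      (𝓝[<] 1) (𝓝 (eulerFactor z z (qIncrement 1 (n + 1)) - 1)) :=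
    (tendsto_eulerFactor z (tendsto_qNumber z)
      ((tendsto_qIncrement_one n.succ_ne_zero).mono_left nhdsWithin_le_nhds)
      (neg_one_lt_zero.trans_le (qIncrement_nonneg zero_le_one _))).sub_const 1
  have hbound : ∀ᶠ q in 𝓝[<] (1 : ℝ), ∀ n : ℕ,
      ‖eulerFactor (qNumber q z) z (qIncrement q (n + 1)) - 1‖
        ≤ M * (1 / ((n + 1 : ℕ) : ℝ) ^ 2) := by
    filter_upwards [Ico_mem_nhdsLT (show (1 / 2 : ℝ) < 1 by norm_num)] with q hq
    exact hM q ⟨one_half_pos.le.trans hq.1, hq.2.le⟩ _ (hB q hq)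
  simpa only [add_sub_cancel] using tendsto_tprod_one_add_of_dominated_convergence
    (summable_one_div_nat_succ_sq.mul_left M) hterm hbound

theorem prod_eulerFactor_qIncrement {q : ℝ} (hq : 0 ≤ q) (c z : ℂ) (N : ℕ) :
    ∏ n ∈ Finset.range N, eulerFactor c z (qIncrement q (n + 1)) =
      (∏ n ∈ Finset.range N, (1 + c * qIncrement q (n + 1))) *
        ((∑ i ∈ Finset.range (N + 1), q ^ i : ℝ) : ℂ) ^ (-z) := by
  induction N with
  | zero => simp
  | succ N ih =>
    have hsum_ne : ∑ i ∈ Finset.range (N + 1), q ^ i ≠ 0 := (geom_sum_pos hq N.succ_ne_zero).ne'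
    have hsum_eq : (∑ i ∈ Finset.range (N + 1 + 1), q ^ i) =
        (∑ i ∈ Finset.range (N + 1), q ^ i) * (1 + qIncrement q (N + 1)) := by
      rw [one_add_qIncrement hq N.succ_ne_zero, mul_div_cancel₀ _ hsum_ne]
    have hincr := qIncrement_nonneg hq (N + 1)
    rw [Finset.prod_range_succ, ih, Finset.prod_range_succ, eulerFactor, hsum_eq, ofReal_mul,
      mul_cpow_ofReal_nonneg (by positivity) (by positivity)]
    ring

theorem inv_GammaSeq_succ (z : ℂ) (N : ℕ) :
    (GammaSeq z (N + 1))⁻¹ =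
      z * (∏ n ∈ Finset.range N, eulerFactor z z (qIncrement 1 (n + 1))) *
        (1 + z / (N + 1 : ℕ)) := by
  have hfactor (n : ℕ) : z + (n + 1 : ℕ) = (n + 1 : ℕ) * (1 + z * qIncrement 1 (n + 1)) := by
    have : ((n + 1 : ℕ) : ℂ) ≠ 0 := Nat.cast_ne_zero.mpr n.succ_ne_zero
    rw [qIncrement_one, ofReal_div, ofReal_one, ofReal_natCast]
    field_simp
    ring
  have hprod : ∏ n ∈ Finset.range (N + 2), (z + n) =
      (N + 1).factorial * (z * (∏ n ∈ Finset.range N, (1 + z * qIncrement 1 (n + 1))) *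
        (1 + z / (N + 1 : ℕ))) := by
    rw [Finset.prod_range_succ', Finset.prod_congr rfl fun n _ ↦ hfactor n,
      Finset.prod_mul_distrib, ← Nat.cast_prod, Finset.prod_range_add_one_eq_factorial,
      Finset.prod_range_succ, qIncrement_one, ofReal_div, ofReal_one, ofReal_natCast,
      Nat.cast_zero, add_zero]
    ring
  have hfact : ((N + 1).factorial : ℂ) ≠ 0 := Nat.cast_ne_zero.mpr (Nat.factorial_ne_zero _)
  rw [GammaSeq, hprod, prod_eulerFactor_qIncrement zero_le_one, one_geom_sum, ofReal_natCast,
    cpow_neg, inv_div, mul_comm _ ((N + 1).factorial : ℂ), mul_div_mul_left _ _ hfact,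
    div_eq_mul_inv]
  ring

theorem mul_tprod_eulerFactor_eq_inv_Gamma {z : ℂ} (hz : ∀ n : ℕ, z ≠ -n) :
    z * ∏' n : ℕ, eulerFactor z z (qIncrement 1 (n + 1)) = (Gamma z)⁻¹ := by
  have hgamma : Tendsto (fun N : ℕ ↦ (GammaSeq z (N + 1))⁻¹) atTop (𝓝 (Gamma z)⁻¹) :=
    ((GammaSeq_tendsto_Gamma z).comp (tendsto_add_atTop_nat 1)).inv₀ (Gamma_ne_zero hz)
  have hmul : Multipliable fun n : ℕ ↦ eulerFactor z z (qIncrement 1 (n + 1)) :=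
    multipliable_eulerFactor_qIncrement (B := 0) ⟨zero_le_one, le_rfl⟩ le_rfl (by simp)
  have hlast : Tendsto (fun N : ℕ ↦ 1 + z / (N + 1 : ℕ)) atTop (𝓝 1) := by
    simpa only [Function.comp_def, add_zero] using ((tendsto_const_div_atTop_nhds_zero_nat z).comp
      (tendsto_add_atTop_nat 1)).const_add 1
  have hprod := (hmul.hasProd.tendsto_prod_nat.const_mul z).mul hlast
  simp only [← inv_GammaSeq_succ, mul_one] at hprod
  exact tendsto_nhds_unique hprod hgamma

theorem tendsto_prod_one_add_qNumber_mul_qIncrement {q : ℝ} (hq : 0 < q) (hq1 : q < 1) (z : ℂ) :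
    Tendsto (fun N ↦ ∏ n ∈ Finset.range N, (1 + qNumber q z * qIncrement q (n + 1))) atTop
      (𝓝 (qPochhammer (q * (q : ℂ) ^ z) q / qPochhammer (q : ℂ) q)) := by
  have hnorm : ‖(q : ℂ)‖ < 1 := by rwa [Complex.norm_of_nonneg hq.le]
  have hlim := (multipliable_qPochhammer (q * (q : ℂ) ^ z) hnorm).hasProd.tendsto_prod_nat.div
    (multipliable_qPochhammer (q : ℂ) hnorm).hasProd.tendsto_prod_nat
    (qPochhammer_self_ne_zero hnorm)
  refine hlim.congr fun N ↦ ?_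
  rw [Pi.div_apply, ← Finset.prod_div_distrib]
  refine Finset.prod_congr rfl fun n _ ↦ ?_
  rw [one_add_qNumber_mul_qIncrement hq hq1 z (Nat.add_one_ne_zero n)]
  ring

theorem tendsto_geom_sum_cpow {q : ℝ} (hq : 0 ≤ q) (hq1 : q < 1) (z : ℂ) :
    Tendsto (fun N ↦ ((∑ i ∈ Finset.range (N + 1), q ^ i : ℝ) : ℂ) ^ (-z)) atTop
      (𝓝 ((1 - q : ℂ) ^ z)) := by
  have hpos : 0 < 1 - q := sub_pos.mpr hq1
  have hinv : (((1 - q)⁻¹ : ℝ) : ℂ) ^ (-z) = (1 - q : ℂ) ^ z := by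
    have harg : ((1 - q : ℝ) : ℂ).arg ≠ Real.pi := by
      rw [arg_ofReal_of_nonneg hpos.le]
      exact Real.pi_ne_zero.symm
    rw [← ofReal_one, ← ofReal_sub, cpow_neg, ofReal_inv, inv_cpow _ _ harg, inv_inv]
  rw [← hinv]
  exact ((hasSum_geometric_of_lt_one hq hq1).tendsto_sum_nat.comp
    (tendsto_add_atTop_nat 1)).ofReal.cpow tendsto_const_nhds
      (ofReal_mem_slitPlane.mpr (inv_pos.mpr hpos))

theorem mul_tprod_eulerFactor_eq_inv_qGamma (z : ℂ) {q : ℝ} (hq : 0 < q) (hq1 : q < 1) :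
    qNumber q z * ∏' n : ℕ, eulerFactor (qNumber q z) z (qIncrement q (n + 1)) =
      (qGamma q z)⁻¹ := by
  have hpos : 0 < 1 - q := sub_pos.mpr hq1
  have hne : (1 - q : ℂ) ≠ 0 := by exact_mod_cast hpos.ne'
  have hnorm : ‖(q : ℂ)‖ < 1 := by rwa [Complex.norm_of_nonneg hq.le]
  have hmul : Multipliable fun n : ℕ ↦ eulerFactor (qNumber q z) z (qIncrement q (n + 1)) :=
    multipliable_eulerFactor_qIncrement (B := ‖qNumber q z - z‖ / (1 - q)) ⟨hq.le, hq1.le⟩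
      (by positivity) (div_mul_cancel₀ _ hpos.ne').ge
  have hlim := (tendsto_prod_one_add_qNumber_mul_qIncrement hq hq1 z).mul
    (tendsto_geom_sum_cpow hq.le hq1 z)
  simp only [← prod_eulerFactor_qIncrement hq.le] at hlim
  rw [tendsto_nhds_unique hmul.hasProd.tendsto_prod_nat hlim, qGamma,
    qPochhammer_eq_mul ((q : ℂ) ^ z) hnorm, cpow_sub _ _ hne, cpow_one, qNumber]
  simp only [mul_inv, div_eq_mul_inv, inv_inv]
  ring

theorem tendsto_qGamma {z : ℂ} (hz : ∀ n : ℕ, z ≠ -n) :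
    Tendsto (fun q ↦ qGamma q z) (𝓝[<] 1) (𝓝 (Gamma z)) := by
  have hinv : Tendsto (fun q ↦ (qGamma q z)⁻¹) (𝓝[<] 1) (𝓝 (Gamma z)⁻¹) := by
    rw [← mul_tprod_eulerFactor_eq_inv_Gamma hz]
    refine ((tendsto_qNumber z).mul (tendsto_tprod_eulerFactor z)).congr' ?_
    filter_upwards [Ioo_mem_nhdsLT one_pos] with q hq
    exact mul_tprod_eulerFactor_eq_inv_qGamma z hq.1 hq.2
  simpa only [inv_inv] using hinv.inv₀ (inv_ne_zero (Gamma_ne_zero hz))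

/-! ### The iterated limit -/

theorem qexp_ofReal_mul_I (t : ℝ) : qexp (t * I) = Real.exp (-(2 * Real.pi * t)) := by
  rw [qexp, ofReal_exp]
  push_cast
  congr 1
  linear_combination (2 * Real.pi * t : ℂ) * I_mul_I

theorem qexp_ofReal_mul_I_mul (t : ℝ) (z : ℂ) :
    qexp (t * I * z) = (Real.exp (-(2 * Real.pi * t)) : ℂ) ^ z := by
  rw [cpow_def_of_ne_zero (ofReal_ne_zero.mpr (Real.exp_ne_zero _)),
    ← ofReal_log (Real.exp_nonneg _), Real.log_exp, qexp]
  push_cast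
  congr 1
  linear_combination (2 * Real.pi * t * z : ℂ) * I_mul_I

theorem tendsto_exp_neg_two_pi_mul :
    Tendsto (fun t : ℝ ↦ Real.exp (-(2 * Real.pi * t))) (𝓝[>] 0) (𝓝[<] 1) := by
  refine tendsto_nhdsWithin_iff.mpr ⟨?_, ?_⟩
  · have : Continuous fun t : ℝ ↦ Real.exp (-(2 * Real.pi * t)) := by fun_prop
    exact (this.tendsto' 0 1 (by simp)).mono_left nhdsWithin_le_nhds
  · filter_upwards [self_mem_nhdsWithin] with t ht
    exact Real.exp_lt_one_iff.mpr (neg_lt_zero.mpr (mul_pos Real.two_pi_pos ht))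

/-- the Euler gamma function as an iterated limit of the elliptic gamma
function: `Γ(z) = lim_{σ→0} lim_{τ→i∞} θ₀(σ,τ)^{1-z} Γ(σz,τ,σ)/Γ(σ,τ,σ)`, with `σ = it`,
`t → 0⁺`, and the principal branch used for the complex power. -/
theorem eulerGamma_limit_of_ellipticGamma (z : ℂ) (hz : ∀ n : ℕ, z ≠ -(n : ℂ)) :
    ∃ F : ℝ → ℂ,
      (∀ t : ℝ, 0 < t →
        Tendsto (fun τ : ℂ =>
            theta0 ((t : ℂ) * Complex.I) τ ^ (1 - z) *
              (ellipticGamma ((t : ℂ) * Complex.I * z) τ ((t : ℂ) * Complex.I) /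
                ellipticGamma ((t : ℂ) * Complex.I) τ ((t : ℂ) * Complex.I)))
          (Filter.comap Complex.im Filter.atTop) (𝓝 (F t))) ∧
      Tendsto F (𝓝[>] (0 : ℝ)) (𝓝 (Complex.Gamma z)) := by
  refine ⟨fun t ↦ qGamma (Real.exp (-(2 * Real.pi * t))) z, fun t ht ↦ ?_,
    (tendsto_qGamma hz).comp tendsto_exp_neg_two_pi_mul⟩
  have hσ : 0 < (t * I).im := by simpa using ht
  have hr := norm_qexp_lt_one hσ
  have hslit : 1 - qexp (t * I) ∈ slitPlane := by
    simpa only [sub_eq_add_neg] using mem_slitPlane_of_norm_lt_one ((norm_neg _).trans_lt hr)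
  have htheta : Tendsto (fun τ ↦ theta0 (t * I) τ ^ (1 - z)) (comap im atTop)
      (𝓝 ((1 - qexp (t * I)) ^ (1 - z))) :=
    (tendsto_theta0_comap_im_atTop _).cpow tendsto_const_nhds hslit
  have hgamma := (tendsto_ellipticGamma_comap_im_atTop (t * I * z) hσ).div
    (tendsto_ellipticGamma_comap_im_atTop (t * I) hσ)
    (inv_ne_zero (qPochhammer_self_ne_zero hr))
  rw [inv_div_inv, qexp_ofReal_mul_I_mul, qexp_ofReal_mul_I] at hgamma
  rw [qexp_ofReal_mul_I] at htheta
  exact htheta.mul hgamma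
end
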